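/- Let j ∈ {1,…,n} and let u be a nonzero vector of the lowest weight w_0ϖ_j in the simple module V(ϖ_j). If i ∈ {1,…,n} is such that E_i·u ≠ 0, then w_0 α_i = −α_j, and E_i·u is a nonzero scalar multiple of a vector of weight w_0 s_j ϖ_j (whose weight space is one-dimensional). -/

import Mathlib

open scoped TensorProduct

/-- The `q`-factorial `(q - q⁻¹)(q² - q⁻²)⋯(qᵐ - q⁻ᵐ)`. -/
noncomputable def qfac (t : ℂ) (m : ℕ) : ℂ :=
  ∏ j ∈ Finset.range m, (t ^ (j + 1) - t⁻¹ ^ (j + 1))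

/-- The `q`-binomial coefficient `[m k]` at parameter `t`. -/
noncomputable def qbinom (t : ℂ) (m k : ℕ) : ℂ :=
  qfac t m / (qfac t k * qfac t (m - k))

/-- The defining relations of the quantised enveloping algebra `U_q(𝔤)` associated to a
Cartan matrix `a` with symmetrising integers `d`, on elements `E i`, `F i`, `K i` of a
`ℂ`-algebra `B`: the `K i` are commuting units, conjugation by `K i` rescales `E j` and
`F j` by `q_i^{±a i j}` (where `q_i = q^{d i}`), the commutator `[E i, F j]` is
`δ_{ij} (K_i - K_i⁻¹)/(q_i - q_i⁻¹)`, and the quantum Serre relations hold. -/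
def UqRels (q : ℂ) {n : ℕ} (a : Fin n → Fin n → ℤ) (d : Fin n → ℕ)
    (B : Type) [Ring B] [Algebra ℂ B] (E F : Fin n → B) (K : Fin n → Bˣ) : Prop :=
  (∀ i j, (K i : B) * (K j : B) = (K j : B) * (K i : B)) ∧
  (∀ i j, (K i : B) * E j = (q ^ ((d i : ℤ) * a i j)) • (E j * (K i : B))) ∧
  (∀ i j, (K i : B) * F j = (q ^ (-((d i : ℤ) * a i j))) • (F j * (K i : B))) ∧
  (∀ i j, E i * F j - F j * E i =
    if i = j then (q ^ (d i : ℤ) - q ^ (-(d i : ℤ)))⁻¹ • ((K i : B) - (((K i)⁻¹ : Bˣ) : B))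
    else 0) ∧
  (∀ i j, i ≠ j → ∑ k ∈ Finset.range ((1 - a i j).toNat + 1),
      ((-1 : ℂ) ^ k * qbinom (q ^ (d i : ℤ)) ((1 - a i j).toNat) k) •
        (E i ^ ((1 - a i j).toNat - k) * E j * E i ^ k) = 0) ∧
  (∀ i j, i ≠ j → ∑ k ∈ Finset.range ((1 - a i j).toNat + 1),
      ((-1 : ℂ) ^ k * qbinom (q ^ (d i : ℤ)) ((1 - a i j).toNat) k) •
        (F i ^ ((1 - a i j).toNat - k) * F j * F i ^ k) = 0)

/-- The weight space of weight `μ = ∑ μ i ϖ i` in a `U_q(𝔤)`-module: the set of vectors on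
which each `K i` acts by the scalar `q^{(μ, α_i)} = q^{μ i * d i}`. -/
noncomputable def wtSp (q : ℂ) {n : ℕ} (d : Fin n → ℕ)
    {U : Type} [Ring U] [Algebra ℂ U] (K : Fin n → Uˣ)
    {Vc : Type} [AddCommGroup Vc] [Module ℂ Vc] (ρ : U →ₐ[ℂ] Module.End ℂ Vc)
    (μ : Fin n → ℤ) : Submodule ℂ Vc :=
  ⨅ i : Fin n, LinearMap.ker (ρ (K i : U) - (q ^ (μ i * (d i : ℤ))) • (1 : Module.End ℂ Vc))

/-- `ξ` is a dual vector of weight `μ`:  equivalently (via the antipode-twisted action on the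
dual module), `ξ` vanishes on every weight space of weight `ν ≠ -μ`. -/
noncomputable def inDualWt (q : ℂ) {n : ℕ} (d : Fin n → ℕ)
    {U : Type} [Ring U] [Algebra ℂ U] (K : Fin n → Uˣ)
    {Vc : Type} [AddCommGroup Vc] [Module ℂ Vc] (ρ : U →ₐ[ℂ] Module.End ℂ Vc)
    (μ : Fin n → ℤ) (ξ : Module.Dual ℂ Vc) : Prop :=
  ∀ ν : Fin n → ℤ, ν ≠ -μ → ∀ x ∈ wtSp q d K ρ ν, ξ x = 0

/-- The Demazure-type submodule generated by the weight space of weight `ν` under the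
subalgebra of `U` generated by `gens` (take `gens = Set.range E` for `V⁺_w(λ)` with
`ν = wλ`, and `gens = Set.range F` for `V⁻_w(λ)`). -/
noncomputable def demazure (q : ℂ) {n : ℕ} (d : Fin n → ℕ)
    {U : Type} [Ring U] [Algebra ℂ U] (gens : Set U) (K : Fin n → Uˣ)
    {Vc : Type} [AddCommGroup Vc] [Module ℂ Vc] (ρ : U →ₐ[ℂ] Module.End ℂ Vc)
    (ν : Fin n → ℤ) : Submodule ℂ Vc :=
  Submodule.span ℂ
    {x | ∃ y ∈ Algebra.adjoin ℂ gens, ∃ u ∈ wtSp q d K ρ ν, x = ρ y u}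

/-- A two-sided ideal of a (possibly noncommutative) ring is prime if it is proper and
`x R y ⊆ P` implies `x ∈ P` or `y ∈ P`. -/
def IsPrimeTwoSided {R : Type*} [Ring R] (P : TwoSidedIdeal R) : Prop :=
  P ≠ ⊤ ∧ ∀ x y : R, (∀ r : R, x * r * y ∈ P) → x ∈ P ∨ y ∈ P

/-- An element `r` of a ring is normal if `rR = Rr`. -/
def IsNormalElem {R : Type*} [Ring R] (r : R) : Prop :=
  (∀ x, ∃ y, r * x = y * r) ∧ ∀ x, ∃ y, x * r = r * y

/-- The ideal `Q⁺_{w}` of `O_q(G)`: generated by the coordinate functions `c^{ϖ_j}_{ξ,v}` with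
`v` a highest weight vector of `V(ϖ_j)` and `ξ` orthogonal to the Demazure module
`V⁺_w(ϖ_j)`. -/
noncomputable def Qplus (q : ℂ) {n : ℕ} (d : Fin n → ℕ)
    {U : Type} [Ring U] [Algebra ℂ U] (E : Fin n → U) (K : Fin n → Uˣ)
    {V : (Fin n → ℕ) → Type} [∀ c, AddCommGroup (V c)] [∀ c, Module ℂ (V c)]
    (ρ : ∀ c, U →ₐ[ℂ] Module.End ℂ (V c))
    {W : Type} [Group W] (σ : W →* Multiplicative (AddAut (Fin n → ℤ)))
    {A : Type} [Ring A]
    (cf : ∀ c : Fin n → ℕ, Module.Dual ℂ (V c) → V c → A)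
    (w : W) : TwoSidedIdeal A :=
  TwoSidedIdeal.span
    {x | ∃ j : Fin n, ∃ ξ : Module.Dual ℂ (V (Pi.single j 1)),
      ∃ v ∈ wtSp q d K (ρ (Pi.single j 1)) (fun k => ((Pi.single j 1 : Fin n → ℕ) k : ℤ)),
        (∀ y ∈ demazure q d (Set.range E) K (ρ (Pi.single j 1))
            (σ w (fun k => ((Pi.single j 1 : Fin n → ℕ) k : ℤ))), ξ y = 0) ∧
        x = cf (Pi.single j 1) ξ v}

/-- The ideal `Q⁻_{w}` of `O_q(G)`: generated by the coordinate functions `c^{ϖ_j}_{ξ,v}` with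
`v` a lowest weight vector of `V(ϖ_j)` and `ξ` orthogonal to the Demazure module
`V⁻_{w w₀}(ϖ_j)`. -/
noncomputable def Qminus (q : ℂ) {n : ℕ} (d : Fin n → ℕ)
    {U : Type} [Ring U] [Algebra ℂ U] (F : Fin n → U) (K : Fin n → Uˣ)
    {V : (Fin n → ℕ) → Type} [∀ c, AddCommGroup (V c)] [∀ c, Module ℂ (V c)]
    (ρ : ∀ c, U →ₐ[ℂ] Module.End ℂ (V c))
    {W : Type} [Group W] (σ : W →* Multiplicative (AddAut (Fin n → ℤ))) (w₀ : W)
    {A : Type} [Ring A]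
    (cf : ∀ c : Fin n → ℕ, Module.Dual ℂ (V c) → V c → A)
    (w : W) : TwoSidedIdeal A :=
  TwoSidedIdeal.span
    {x | ∃ j : Fin n, ∃ ξ : Module.Dual ℂ (V (Pi.single j 1)),
      ∃ v ∈ wtSp q d K (ρ (Pi.single j 1)) (σ w₀ (fun k => ((Pi.single j 1 : Fin n → ℕ) k : ℤ))),
        (∀ y ∈ demazure q d (Set.range F) K (ρ (Pi.single j 1))
            (σ (w * w₀) (fun k => ((Pi.single j 1 : Fin n → ℕ) k : ℤ))), ξ y = 0) ∧
        x = cf (Pi.single j 1) ξ v}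

/-!
Write `w₀ ϖⱼ = -ϖ_{π j}`. Since `E i u ≠ 0`, the weight `w₀ ϖⱼ + αᵢ` occurs in `V(ϖⱼ)`. The set of
weights is stable under `W` (quantum `sl₂` strings) and lies below `ϖⱼ`; this forces the `i`-th
coordinate of `w₀ ϖⱼ` to be nonzero, that is, `i = π j`. Moreover `w₀ sⱼ w₀⁻¹ = s_{π j}`, so that
`-w₀` permutes the simple roots by `π` as well, and comparing `ϖⱼ` with `w₀² ϖⱼ` and `w₀⁻² ϖⱼ` gives
`π (π j) = j`. Hence `w₀ αᵢ = -αⱼ` and `w₀ sⱼ ϖⱼ = w₀ ϖⱼ + αᵢ`.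
-/

/-- The simple root `α i = ∑ k, a k i • ϖ k` of the Cartan matrix `a`, in the basis of fundamental
weights. -/
def simpleRoot {ι : Type*} (a : ι → ι → ℤ) (i : ι) : ι → ℤ := fun k => a k i

/-- The monoid `Q⁺ = ∑ ℕ α i` spanned by the simple roots; `λ - μ ∈ Q⁺` is the usual order `μ ≤ λ`
on weights. -/
def positiveRootMonoid {ι : Type*} (a : ι → ι → ℤ) : Submodule ℕ (ι → ℤ) :=
  Submodule.span ℕ (Set.range (simpleRoot a))

/-- `W` acts on the weight lattice `ι → ℤ`, taken in the basis of fundamental weights, as the Weyl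
group of the Cartan matrix `a` with simple reflections `s`. -/
structure IsWeylAction {ι W : Type*} [Group W] [DistribMulAction W (ι → ℤ)]
    (a : ι → ι → ℤ) (s : ι → W) : Prop where
  diag : ∀ i, a i i = 2
  closure_eq_top : Subgroup.closure (Set.range s) = ⊤
  smul_eq : ∀ i μ, s i • μ = μ - μ i • simpleRoot a i

/-- The permutation `π` is the opposition involution `-w₀` of the Dynkin diagram: it describes the
action of `-w₀` on fundamental weights and on simple roots. -/
structure IsOpposition {ι W : Type*} [DecidableEq ι] [Group W] [DistribMulAction W (ι → ℤ)]
    (a : ι → ι → ℤ) (w₀ : W) (π : Equiv.Perm ι) : Prop where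
  smul_fundamental : ∀ j, w₀ • (Pi.single j 1 : ι → ℤ) = -Pi.single (π j) 1
  smul_simpleRoot : ∀ j, w₀ • simpleRoot a j = -simpleRoot a (π j)

theorem simpleRoot_ne_zero {ι : Type*} {a : ι → ι → ℤ} {i : ι} (hi : a i i ≠ 0) :
    simpleRoot a i ≠ 0 :=
  fun h => hi (congrFun h i)

theorem simpleRoot_mem_positiveRootMonoid {ι : Type*} (a : ι → ι → ℤ) (i : ι) :
    simpleRoot a i ∈ positiveRootMonoid a :=
  Submodule.subset_span ⟨i, rfl⟩

theorem zero_covBy_iff_exists_single {ι : Type*} [DecidableEq ι] {x : ι → ℤ} :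
    0 ⋖ x ↔ ∃ k, x = Pi.single k 1 := by
  simp only [Pi.covBy_iff_exists_right_eq, Order.covBy_iff_add_one_eq, Pi.zero_apply, zero_add,
    exists_eq_left', Pi.single]

theorem eq_zero_of_isOfFinOrder_smul_eq_add {G M : Type*} [Monoid G] [AddCommGroup M]
    [IsAddTorsionFree M] [DistribMulAction G M] {t : G} (ht : IsOfFinOrder t) {x y : M}
    (hx : t • x = x + y) (hy : t • y = y) : y = 0 := by
  obtain ⟨m, hm, htm⟩ := isOfFinOrder_iff_pow_eq_one.1 ht
  have hpow (k : ℕ) : t ^ k • x = x + k • y := by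
    induction k with
    | zero => simp
    | succ k ih => rw [pow_succ', mul_smul, ih, smul_add, smul_comm, hx, hy, succ_nsmul']; abel
  have hmy : m • y = 0 := by simpa [htm] using hpow m
  exact (nsmul_eq_zero_iff_right hm.ne').1 hmy

section Longest

variable {ι W : Type*} [Group W] [Finite W] [DistribMulAction W (ι → ℤ)] {w₀ : W}

theorem inv_smul_nonpos_of_nonneg (hw₀ : ∀ μ : ι → ℤ, 0 ≤ μ → w₀ • μ ≤ 0) {μ : ι → ℤ}
    (hμ : 0 ≤ μ) : w₀⁻¹ • μ ≤ 0 := by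
  have hodd (m : ℕ) : w₀ ^ (2 * m + 1) • μ ≤ 0 := by
    induction m with
    | zero => simpa using hw₀ μ hμ
    | succ m ih =>
      have h := hw₀ _ (neg_nonneg.2 (hw₀ _ (neg_nonneg.2 ih)))
      rw [show 2 * (m + 1) + 1 = 2 * m + 1 + 1 + 1 by ring, pow_succ', pow_succ', mul_smul,
        mul_smul]
      simpa only [smul_neg, neg_neg] using h
  have hinv : w₀⁻¹ = w₀ ^ (2 * (orderOf w₀ - 1) + 1) := by
    have hpos := orderOf_pos w₀
    rw [inv_eq_iff_mul_eq_one, ← pow_succ',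
      show 2 * (orderOf w₀ - 1) + 1 + 1 = orderOf w₀ * 2 by omega, pow_mul, pow_orderOf_eq_one,
      one_pow]
  exact hinv ▸ hodd _

/-- The order automorphism `μ ↦ -w₀ μ` of the weight lattice. -/
def negLongestOrderIso (hw₀ : ∀ μ : ι → ℤ, 0 ≤ μ → w₀ • μ ≤ 0) : (ι → ℤ) ≃o (ι → ℤ) where
  toFun μ := -(w₀ • μ)
  invFun μ := -(w₀⁻¹ • μ)
  left_inv μ := by simp [smul_neg]
  right_inv μ := by simp [smul_neg]
  map_rel_iff' {μ ν} := by
    rw [Equiv.coe_fn_mk, neg_le_neg_iff]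
    constructor <;> intro h
    · simpa [smul_sub] using inv_smul_nonpos_of_nonneg hw₀ (sub_nonneg.2 h)
    · simpa [smul_sub] using hw₀ _ (sub_nonneg.2 h)

variable [Finite ι] [DecidableEq ι]

/-- An order automorphism fixing `0` permutes the covers of `0`, which are the fundamental
weights. -/
theorem exists_perm_smul_single (hw₀ : ∀ μ : ι → ℤ, 0 ≤ μ → w₀ • μ ≤ 0) :
    ∃ π : Equiv.Perm ι, ∀ j, w₀ • (Pi.single j 1 : ι → ℤ) = -Pi.single (π j) 1 := by
  have hcov (j : ι) : ∃ k, w₀ • (Pi.single j 1 : ι → ℤ) = -Pi.single k 1 := by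
    have h : negLongestOrderIso hw₀ 0 ⋖ negLongestOrderIso hw₀ (Pi.single j 1) :=
      (apply_covBy_apply_iff _).2 (zero_covBy_iff_exists_single.2 ⟨j, rfl⟩)
    simpa [negLongestOrderIso, zero_covBy_iff_exists_single, neg_eq_iff_eq_neg] using h
  choose π hπ using hcov
  have hinj : Function.Injective π := fun i j hij => by
    have h : (Pi.single i 1 : ι → ℤ) = Pi.single j 1 :=
      MulAction.injective w₀ (by simp only [hπ, hij])
    simpa [Pi.single_apply, eq_comm] using congrFun h i
  exact ⟨Equiv.ofBijective π (Finite.injective_iff_bijective.1 hinj), hπ⟩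

end Longest

theorem smul_apply_perm {ι W : Type*} [Finite ι] [DecidableEq ι] [Group W]
    [DistribMulAction W (ι → ℤ)] {w₀ : W} {π : Equiv.Perm ι}
    (hπ : ∀ j, w₀ • (Pi.single j 1 : ι → ℤ) = -Pi.single (π j) 1) (μ : ι → ℤ) (j : ι) :
    (w₀ • μ) (π j) = -μ j := by
  let f : (ι → ℤ) →ₗ[ℤ] ℤ :=
    LinearMap.proj (π j) ∘ₗ (DistribSMul.toAddMonoidHom (ι → ℤ) w₀).toIntLinearMap
  have hf : f = -LinearMap.proj j :=
    (Pi.basisFun ℤ ι).ext fun i => by simp [f, hπ, Pi.single_apply]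
  exact LinearMap.congr_fun hf μ

namespace IsWeylAction

variable {ι W : Type*} [Group W] [DistribMulAction W (ι → ℤ)] {a : ι → ι → ℤ} {s : ι → W}

theorem sum_smul_eq_zero [Fintype W] (h : IsWeylAction a s) (μ : ι → ℤ) :
    ∑ w : W, w • μ = 0 := by
  funext i
  have hfix : s i • ∑ w : W, w • μ = ∑ w : W, w • μ := by
    rw [Finset.smul_sum]
    exact Fintype.sum_equiv (Equiv.mulLeft (s i)) (fun w => s i • w • μ) (fun w => w • μ)
      fun w => (mul_smul (s i) w μ).symm
  rw [h.smul_eq, sub_eq_self] at hfix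
  simpa [simpleRoot, h.diag] using congrFun hfix i

variable [Finite W]

theorem induction (h : IsWeylAction a s) {p : W → Prop} (one : p 1)
    (mul : ∀ i w, p w → p (s i * w)) (w : W) : p w := by
  have hw : w ∈ Submonoid.closure (Set.range s) := by
    rw [← Subgroup.closure_toSubmonoid_of_finite, h.closure_eq_top]
    exact Subgroup.mem_top w
  induction hw using Submonoid.closure_induction_left with
  | one => exact one
  | mul_left x hx y _ ih =>
    obtain ⟨i, rfl⟩ := hx
    exact mul i y ih

/-- Both `w₀ sⱼ w₀⁻¹` and `s (π j)` negate the coordinate `π j` and fix the hyperplane where it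
vanishes; their product is unipotent of finite order, hence trivial. -/
theorem smul_simpleRoot_perm [Finite ι] [DecidableEq ι] (h : IsWeylAction a s) {w₀ : W}
    {π : Equiv.Perm ι} (hπ : ∀ j, w₀ • (Pi.single j 1 : ι → ℤ) = -Pi.single (π j) 1) (j : ι) :
    w₀ • simpleRoot a j = -simpleRoot a (π j) := by
  set γ : ι → ℤ := w₀ • simpleRoot a j + simpleRoot a (π j) with hγ
  have hγj : γ (π j) = 0 := by
    simp [hγ, smul_apply_perm hπ, simpleRoot, h.diag]
  have hconj (x : ι → ℤ) : (w₀ * s j * w₀⁻¹) • x = x + x (π j) • w₀ • simpleRoot a j := by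
    have hx : (w₀⁻¹ • x) j = -x (π j) := by
      rw [eq_neg_iff_add_eq_zero, ← neg_eq_zero, neg_add, ← smul_apply_perm hπ, smul_inv_smul]
      simp
    rw [mul_smul, mul_smul, h.smul_eq, hx, smul_sub, smul_inv_smul, smul_comm, neg_smul,
      sub_neg_eq_add]
  have hprod (x : ι → ℤ) : (w₀ * s j * w₀⁻¹ * s (π j)) • x = x - x (π j) • γ := by
    rw [mul_smul, hconj, h.smul_eq]
    have : (x - x (π j) • simpleRoot a (π j)) (π j) = -x (π j) := by
      rw [Pi.sub_apply, Pi.smul_apply, simpleRoot, h.diag, smul_eq_mul]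
      ring
    rw [this, hγ, neg_smul, smul_add]
    abel
  have hneg : -γ = 0 := eq_zero_of_isOfFinOrder_smul_eq_add
    (isOfFinOrder_of_finite (w₀ * s j * w₀⁻¹ * s (π j))) (x := Pi.single (π j) 1)
    (by simp [hprod, sub_eq_add_neg]) (by simp [hprod, hγj])
  exact eq_neg_of_add_eq_zero_left (neg_eq_zero.1 hneg)

theorem exists_isOpposition [Finite ι] [DecidableEq ι] (h : IsWeylAction a s) {w₀ : W}
    (hw₀ : ∀ μ : ι → ℤ, 0 ≤ μ → w₀ • μ ≤ 0) : ∃ π, IsOpposition a w₀ π := by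
  obtain ⟨π, hπ⟩ := exists_perm_smul_single hw₀
  exact ⟨π, hπ, h.smul_simpleRoot_perm hπ⟩

theorem dotProduct_smul_eq [Fintype ι] (h : IsWeylAction a s) {c : ι → ℤ}
    (hc : Matrix.vecMul c (Matrix.of a) = 0) (w : W) (μ : ι → ℤ) :
    c ⬝ᵥ (w • μ) = c ⬝ᵥ μ := by
  refine h.induction (p := fun w => c ⬝ᵥ (w • μ) = c ⬝ᵥ μ) (by rw [one_smul]) (fun i w ih => ?_) w
  have hroot : c ⬝ᵥ simpleRoot a i = 0 := congrFun hc i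
  rw [mul_smul, h.smul_eq, dotProduct_sub, dotProduct_smul, hroot, smul_zero, sub_zero, ih]

/-- A functional killing the simple roots is `W`-invariant, hence vanishes because every orbit sums
to `0`. -/
theorem linearIndependent_simpleRoot [Finite ι] (h : IsWeylAction a s) :
    LinearIndependent ℤ (simpleRoot a) := by
  classical
  have := Fintype.ofFinite ι
  have := Fintype.ofFinite W
  refine Matrix.linearIndependent_cols_of_det_ne_zero (A := Matrix.of a) fun hdet => ?_
  obtain ⟨c, hc0, hc⟩ := Matrix.exists_vecMul_eq_zero_iff.2 hdet
  refine hc0 (funext fun i => ?_)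
  have hsum : ∑ w : W, c ⬝ᵥ (w • (Pi.single i 1 : ι → ℤ)) = 0 := by
    rw [← dotProduct_sum, h.sum_smul_eq_zero, dotProduct_zero]
  simpa [h.dotProduct_smul_eq hc] using hsum

theorem eq_zero_of_mem_of_neg_mem [Finite ι] (h : IsWeylAction a s) {x : ι → ℤ}
    (hx : x ∈ positiveRootMonoid a) (hnx : -x ∈ positiveRootMonoid a) : x = 0 := by
  have := Fintype.ofFinite ι
  obtain ⟨b, rfl⟩ := (Submodule.mem_span_range_iff_exists_fun ℕ).1 hx
  obtain ⟨c, hc⟩ := (Submodule.mem_span_range_iff_exists_fun ℕ).1 hnx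
  have hsum : ∑ i, ((b i + c i : ℕ) : ℤ) • simpleRoot a i = 0 := by
    simp only [natCast_zsmul, add_smul, Finset.sum_add_distrib, hc, add_neg_cancel]
  have hzero := Fintype.linearIndependent_iff.1 h.linearIndependent_simpleRoot _ hsum
  exact Finset.sum_eq_zero fun i _ => by
    rw [show b i = 0 by have := hzero i; omega, zero_smul]

end IsWeylAction

namespace IsOpposition

variable {ι W : Type*} [DecidableEq ι] [Group W] [DistribMulAction W (ι → ℤ)]
  {a : ι → ι → ℤ} {w₀ : W} {π : Equiv.Perm ι}

theorem inv_smul_simpleRoot (h : IsOpposition a w₀ π) (i : ι) :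
    w₀⁻¹ • simpleRoot a i = -simpleRoot a (π.symm i) := by
  rw [inv_smul_eq_iff, smul_neg, h.smul_simpleRoot, neg_neg, Equiv.apply_symm_apply]

theorem neg_smul_mem (h : IsOpposition a w₀ π) {x : ι → ℤ} (hx : x ∈ positiveRootMonoid a) :
    -(w₀ • x) ∈ positiveRootMonoid a := by
  induction hx using Submodule.span_induction with
  | mem x hx =>
    obtain ⟨i, rfl⟩ := hx
    simpa [h.smul_simpleRoot] using simpleRoot_mem_positiveRootMonoid a (π i)
  | zero => simp
  | add x y _ _ hx hy => rw [smul_add, neg_add]; exact add_mem hx hy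
  | smul m x _ hx => rw [smul_comm, ← smul_neg]; exact Submodule.smul_mem _ m hx

end IsOpposition

section QuantumSl2

theorem zpow_injective_of_transcendental {R A : Type*} [CommRing R] [Nontrivial R] [Field A]
    [Algebra R A] {q : A} (hq : Transcendental R q) :
    Function.Injective fun k : ℤ => q ^ k := by
  have hq0 : q ≠ 0 := by
    rintro rfl
    exact hq isAlgebraic_zero
  have hord : ¬IsOfFinOrder (Units.mk0 q hq0) := fun h => by
    obtain ⟨m, hm, hqm⟩ := isOfFinOrder_iff_pow_eq_one.1 h
    have hone : q ^ m = 1 := by simpa [Units.ext_iff] using hqm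
    exact hq (IsAlgebraic.of_pow hm (hone ▸ isAlgebraic_one))
  intro k l hkl
  exact injective_zpow_iff_not_isOfFinOrder.2 hord (by simpa [Units.ext_iff] using hkl)

variable {𝕜 : Type*} [Field 𝕜]

theorem ne_zero_of_zpow_injective {t : 𝕜} (ht : Function.Injective fun k : ℤ => t ^ k) :
    t ≠ 0 := by
  rintro rfl
  exact absurd (ht (a₁ := 1) (a₂ := 2) (by simp)) (by decide)

theorem zpow_injective_pow {t : 𝕜} (ht : Function.Injective fun k : ℤ => t ^ k) {m : ℕ}
    (hm : 0 < m) : Function.Injective fun k : ℤ => (t ^ m) ^ k := by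
  intro k l hkl
  simp only [← zpow_natCast, ← zpow_mul] at hkl
  exact mul_left_cancel₀ (by omega) (ht hkl)

/-- The quantum integer `[k] = (t ^ k - t⁻ᵏ) / (t - t⁻¹)` at parameter `t`. -/
def qInt (t : 𝕜) (k : ℤ) : 𝕜 := (t - t⁻¹)⁻¹ * (t ^ k - t ^ (-k))

theorem qInt_zero (t : 𝕜) : qInt t 0 = 0 := by simp [qInt]

theorem zpow_sub_zpow_neg_ne_zero {t : 𝕜} (ht : Function.Injective fun k : ℤ => t ^ k) {k : ℤ}
    (hk : k ≠ 0) : t ^ k - t ^ (-k) ≠ 0 :=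
  sub_ne_zero.2 fun h => hk (self_eq_neg.1 (ht h))

theorem qInt_ne_zero {t : 𝕜} (ht : Function.Injective fun k : ℤ => t ^ k) {k : ℤ} (hk : k ≠ 0) :
    qInt t k ≠ 0 := by
  have hone := zpow_sub_zpow_neg_ne_zero ht one_ne_zero
  rw [zpow_one, zpow_neg_one] at hone
  exact mul_ne_zero (inv_ne_zero hone) (zpow_sub_zpow_neg_ne_zero ht hk)

theorem qInt_mul_qInt_add_qInt {t : 𝕜} (ht : Function.Injective fun k : ℤ => t ^ k) (M k : ℤ) :
    qInt t k * qInt t (M - k + 1) + qInt t (M - 2 * k) = qInt t (k + 1) * qInt t (M - k) := by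
  have ht0 := ne_zero_of_zpow_injective ht
  have hone := zpow_sub_zpow_neg_ne_zero ht one_ne_zero
  rw [zpow_one, zpow_neg_one] at hone
  have hcleared : (t ^ k - t ^ (-k)) * (t ^ (M - k + 1) - t ^ (-(M - k + 1))) +
      (t - t⁻¹) * (t ^ (M - 2 * k) - t ^ (-(M - 2 * k))) =
      (t ^ (k + 1) - t ^ (-(k + 1))) * (t ^ (M - k) - t ^ (-(M - k))) := by
    have hk : t ^ k ≠ 0 := zpow_ne_zero _ ht0
    have hM : t ^ M ≠ 0 := zpow_ne_zero _ ht0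
    simp only [zpow_neg, zpow_add₀ ht0, zpow_sub₀ ht0, zpow_one, two_mul]
    generalize t ^ k = X at *
    generalize t ^ M = Y at *
    field_simp
    ring
  unfold qInt
  linear_combination ((t - t⁻¹)⁻¹) ^ 2 * hcleared -
    ((t - t⁻¹)⁻¹ * (t ^ (M - 2 * k) - t ^ (-(M - 2 * k)))) * inv_mul_cancel₀ hone

variable {V : Type*} [AddCommGroup V] [Module 𝕜 V]

/-- `z` is a primitive vector of weight `M` for the operators `e` and `f` of quantum `sl₂`. Only
the effect of the commutator `[e, f]` on the vectors `fᵏ z` is recorded, so that the torus does not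
enter. -/
structure IsQuantumPrimitive (t : 𝕜) (e f : Module.End 𝕜 V) (M : ℤ) (z : V) : Prop where
  apply_eq_zero : e z = 0
  commutator_apply : ∀ k : ℕ,
    e (f ((f ^ k) z)) - f (e ((f ^ k) z)) = qInt t (M - 2 * k) • (f ^ k) z

namespace IsQuantumPrimitive

variable {t : 𝕜} {e f : Module.End 𝕜 V} {M : ℤ} {z : V}

theorem apply_pow_succ (h : IsQuantumPrimitive t e f M z)
    (ht : Function.Injective fun k : ℤ => t ^ k) (k : ℕ) :
    e ((f ^ (k + 1)) z) = (qInt t (k + 1) * qInt t (M - k)) • (f ^ k) z := by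
  have hcomm (k : ℕ) : e ((f ^ (k + 1)) z) =
      qInt t (M - 2 * k) • (f ^ k) z + f (e ((f ^ k) z)) := by
    rw [pow_succ', Module.End.mul_apply, ← h.commutator_apply, sub_add_cancel]
  rw [← qInt_mul_qInt_add_qInt ht, add_smul, hcomm, add_comm]
  congr 1
  induction k with
  | zero => simp [h.apply_eq_zero, qInt_zero]
  | succ k ih =>
    rw [hcomm, ih, ← add_smul, add_comm, qInt_mul_qInt_add_qInt ht, map_smul, pow_succ',
      Module.End.mul_apply, Nat.cast_succ, show M - ((k : ℤ) + 1) + 1 = M - k by ring]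

theorem pow_apply_ne_zero (h : IsQuantumPrimitive t e f M z)
    (ht : Function.Injective fun k : ℤ => t ^ k) (hz : z ≠ 0) {k : ℕ} (hk : (k : ℤ) ≤ M) :
    (f ^ k) z ≠ 0 := by
  induction k with
  | zero => simpa using hz
  | succ k ih =>
    push_cast at hk
    intro hzero
    have hsmul := h.apply_pow_succ ht k
    rw [hzero, map_zero, eq_comm] at hsmul
    exact smul_ne_zero (mul_ne_zero (qInt_ne_zero ht (by omega)) (qInt_ne_zero ht (by omega)))
      (ih (by omega)) hsmul

end IsQuantumPrimitive

end QuantumSl2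

section WeightSpaces

variable {q : ℂ} {n : ℕ} {a : Fin n → Fin n → ℤ} {d : Fin n → ℕ}
  {U : Type} [Ring U] [Algebra ℂ U] {E F : Fin n → U} {K : Fin n → Uˣ}
  {V : Type} [AddCommGroup V] [Module ℂ V] {ρ : U →ₐ[ℂ] Module.End ℂ V}

theorem mem_wtSp_iff {μ : Fin n → ℤ} {x : V} :
    x ∈ wtSp q d K ρ μ ↔ ∀ i, ρ (K i : U) x = q ^ (μ i * (d i : ℤ)) • x := by
  simp only [wtSp, Submodule.mem_iInf, LinearMap.mem_ker, LinearMap.sub_apply,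
    LinearMap.smul_apply, Module.End.one_apply, sub_eq_zero]

theorem inv_apply_of_mem_wtSp (hq : q ≠ 0) {μ : Fin n → ℤ} {x : V} (hx : x ∈ wtSp q d K ρ μ)
    (i : Fin n) : ρ ((K i)⁻¹ : Uˣ) x = q ^ (-(μ i * (d i : ℤ))) • x := by
  rw [zpow_neg, eq_inv_smul_iff₀ (zpow_ne_zero _ hq), ← map_smul, ← mem_wtSp_iff.1 hx i,
    ← Module.End.mul_apply, ← map_mul, Units.inv_mul, map_one, Module.End.one_apply]

theorem wtSp_inv (hq : q ≠ 0) (μ : Fin n → ℤ) : wtSp q d K⁻¹ ρ μ = wtSp q d K ρ (-μ) := by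
  have hle (K : Fin n → Uˣ) (μ : Fin n → ℤ) : wtSp q d K ρ μ ≤ wtSp q d K⁻¹ ρ (-μ) :=
    fun x hx => mem_wtSp_iff.2 fun i => by
      simpa only [Pi.inv_apply, Pi.neg_apply, neg_mul] using inv_apply_of_mem_wtSp hq hx i
  refine le_antisymm ?_ ?_
  · simpa only [inv_inv] using hle K⁻¹ μ
  · simpa only [neg_neg] using hle K (-μ)

theorem UqRels.iSupIndep_wtSp (hrel : UqRels q a d U E F K)
    (hq : Function.Injective fun k : ℤ => q ^ k) (hd : ∀ i, 0 < d i) :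
    iSupIndep fun μ : Fin n → ℤ => wtSp q d K ρ μ := by
  have hcomm (i j : Fin n) : Commute (ρ (K i : U)) (ρ (K j : U)) :=
    Commute.map (hrel.1 i j) ρ
  have hindep := Module.End.independent_iInf_maxGenEigenspace_of_forall_mapsTo
    (fun i : Fin n => ρ (K i : U))
    (fun i j φ => Module.End.mapsTo_maxGenEigenspace_of_comm (hcomm j i) φ)
  have hinj : Function.Injective fun (μ : Fin n → ℤ) i => q ^ (μ i * (d i : ℤ)) :=
    fun μ ν h => funext fun i =>
      mul_right_cancel₀ (Nat.cast_ne_zero.2 (hd i).ne') (hq (congrFun h i))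
  refine (hindep.comp hinj).mono fun μ => iInf_mono fun i x hx => ?_
  rw [Module.End.mem_maxGenEigenspace]
  exact ⟨1, by rwa [pow_one]⟩

namespace UqRels

theorem chevalley_involution (hrel : UqRels q a d U E F K) (hq : q ≠ 0) :
    UqRels q a d U F E K⁻¹ := by
  obtain ⟨hKK, hKE, hKF, hEF, hEserre, hFserre⟩ := hrel
  have hinv {x : U} {k : ℤ} {i : Fin n} (h : (K i : U) * x = q ^ (-k) • (x * (K i : U))) :
      ((K i)⁻¹ : Uˣ) * x = q ^ k • (x * ((K i)⁻¹ : Uˣ)) := by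
    rw [Units.inv_mul_eq_iff_eq_mul, mul_smul_comm, ← mul_assoc, h, smul_mul_assoc,
      Units.mul_inv_cancel_right, smul_smul, ← zpow_add₀ hq, add_neg_cancel, zpow_zero, one_smul]
  refine ⟨fun i j => ?_, fun i j => hinv (hKF i j), fun i j => hinv ?_, fun i j => ?_,
    hFserre, hEserre⟩
  · exact congrArg Units.val (Commute.inv_inv (Units.ext (hKK i j) : Commute (K i) (K j)))
  · rw [neg_neg, hKE]
  · rw [← neg_sub, hEF]
    rcases eq_or_ne i j with rfl | hij
    · simp only [if_true, Pi.inv_apply, inv_inv, ← smul_neg, neg_sub]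
    · rw [if_neg hij, if_neg hij.symm, neg_zero]

theorem E_apply_mem_wtSp (hrel : UqRels q a d U E F K) (hq : q ≠ 0) {μ : Fin n → ℤ} {x : V}
    (hx : x ∈ wtSp q d K ρ μ) (i : Fin n) : ρ (E i) x ∈ wtSp q d K ρ (μ + simpleRoot a i) := by
  refine mem_wtSp_iff.2 fun k => ?_
  rw [← Module.End.mul_apply, ← map_mul, hrel.2.1 k i, map_smul, map_mul, LinearMap.smul_apply,
    Module.End.mul_apply, mem_wtSp_iff.1 hx k, map_smul, smul_smul, ← zpow_add₀ hq, Pi.add_apply,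
    simpleRoot, add_mul, add_comm, mul_comm (a k i)]

theorem F_apply_mem_wtSp (hrel : UqRels q a d U E F K) (hq : q ≠ 0) {μ : Fin n → ℤ} {x : V}
    (hx : x ∈ wtSp q d K ρ μ) (i : Fin n) : ρ (F i) x ∈ wtSp q d K ρ (μ - simpleRoot a i) := by
  rw [← neg_neg μ, ← wtSp_inv hq] at hx
  have h := (hrel.chevalley_involution hq).E_apply_mem_wtSp hq hx i
  rwa [wtSp_inv hq, neg_add, neg_neg, ← sub_eq_add_neg] at h

theorem F_pow_apply_mem_wtSp (hrel : UqRels q a d U E F K) (hq : q ≠ 0) {μ : Fin n → ℤ} {x : V}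
    (hx : x ∈ wtSp q d K ρ μ) (i : Fin n) (k : ℕ) :
    (ρ (F i) ^ k) x ∈ wtSp q d K ρ (μ - k • simpleRoot a i) := by
  induction k with
  | zero => simpa using hx
  | succ k ih =>
    rw [pow_succ', Module.End.mul_apply, succ_nsmul, ← sub_sub]
    exact hrel.F_apply_mem_wtSp hq ih i

theorem commutator_apply (hrel : UqRels q a d U E F K) (hq : q ≠ 0) {μ : Fin n → ℤ} {x : V}
    (hx : x ∈ wtSp q d K ρ μ) (i j : Fin n) :
    ρ (E i) (ρ (F j) x) - ρ (F j) (ρ (E i) x) =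
      if i = j then qInt (q ^ d i) (μ i) • x else 0 := by
  have h := congrArg (fun u => ρ u x) (hrel.2.2.2.1 i j)
  simp only [map_sub, map_mul, LinearMap.sub_apply, Module.End.mul_apply] at h
  rw [h]
  split_ifs
  · rw [map_smul, map_sub, LinearMap.smul_apply, LinearMap.sub_apply, mem_wtSp_iff.1 hx i,
      inv_apply_of_mem_wtSp hq hx i, ← sub_smul, smul_smul, qInt, mul_comm (μ i), ← mul_neg,
      zpow_mul, zpow_mul, zpow_neg, zpow_natCast]
  · rw [map_zero, LinearMap.zero_apply]

theorem isQuantumPrimitive (hrel : UqRels q a d U E F K) (hq : q ≠ 0) (ha : ∀ i, a i i = 2)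
    {i : Fin n} {μ : Fin n → ℤ} {z : V} (hz : z ∈ wtSp q d K ρ μ) (hEz : ρ (E i) z = 0) :
    IsQuantumPrimitive (q ^ d i) (ρ (E i)) (ρ (F i)) (μ i) z where
  apply_eq_zero := hEz
  commutator_apply k := by
    rw [hrel.commutator_apply hq (hrel.F_pow_apply_mem_wtSp hq hz i k), if_pos rfl, Pi.sub_apply,
      Pi.smul_apply, simpleRoot, ha, nsmul_eq_mul, mul_comm (2 : ℤ)]

variable [FiniteDimensional ℂ V]

theorem exists_wtSp_add_nsmul_ne_bot_and_eq_bot (hrel : UqRels q a d U E F K)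
    (hq : Function.Injective fun k : ℤ => q ^ k) (hd : ∀ i, 0 < d i) {μ α : Fin n → ℤ}
    (hα : α ≠ 0) (hμ : wtSp q d K ρ μ ≠ ⊥) :
    ∃ t : ℕ, wtSp q d K ρ (μ + t • α) ≠ ⊥ ∧ wtSp q d K ρ (μ + t • α + α) = ⊥ := by
  by_contra! hstep
  have hall (t : ℕ) : wtSp q d K ρ (μ + t • α) ≠ ⊥ := by
    induction t with
    | zero => simpa using hμ
    | succ t ih => simpa only [succ_nsmul, add_assoc] using hstep t ih
  have hinj : Function.Injective fun t : ℕ => μ + t • α :=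
    fun t t' h => (IsAddLeftRegular.all α).nsmul_injective hα (add_left_cancel h)
  exact Set.infinite_of_injective_forall_mem hinj hall
    (WellFoundedGT.finite_ne_bot_of_iSupIndep (hrel.iSupIndep_wtSp hq hd))

/-- Go up the `αᵢ`-string of `μ` to its top and come back down with `Fᵢ`. -/
theorem wtSp_reflection_ne_bot_of_nonneg (hrel : UqRels q a d U E F K)
    (hq : Function.Injective fun k : ℤ => q ^ k) (hd : ∀ i, 0 < d i) (ha : ∀ i, a i i = 2)
    {i : Fin n} {μ : Fin n → ℤ} (hi : 0 ≤ μ i) (hμ : wtSp q d K ρ μ ≠ ⊥) :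
    wtSp q d K ρ (μ - μ i • simpleRoot a i) ≠ ⊥ := by
  have hq0 := ne_zero_of_zpow_injective hq
  have hroot : simpleRoot a i ≠ 0 := simpleRoot_ne_zero (by rw [ha]; exact two_ne_zero)
  obtain ⟨t, ht, htop⟩ := hrel.exists_wtSp_add_nsmul_ne_bot_and_eq_bot hq hd hroot hμ
  obtain ⟨z, hz, hz0⟩ := Submodule.exists_mem_ne_zero_of_ne_bot ht
  have hEz : ρ (E i) z = 0 := (Submodule.mem_bot ℂ).1 (htop ▸ hrel.E_apply_mem_wtSp hq0 hz i)
  obtain ⟨m, hm⟩ := Int.eq_ofNat_of_zero_le hi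
  have hlow := hrel.F_pow_apply_mem_wtSp hq0 hz i (m + t)
  rw [add_smul, add_sub_add_right_eq_sub, ← natCast_zsmul, ← hm] at hlow
  refine (Submodule.ne_bot_iff _).2 ⟨_, hlow, ?_⟩
  refine (hrel.isQuantumPrimitive hq0 ha hz hEz).pow_apply_ne_zero
    (zpow_injective_pow hq (hd i)) hz0 ?_
  rw [Pi.add_apply, Pi.smul_apply, simpleRoot, ha, hm, nsmul_eq_mul]
  push_cast
  omega

theorem wtSp_reflection_ne_bot (hrel : UqRels q a d U E F K)
    (hq : Function.Injective fun k : ℤ => q ^ k) (hd : ∀ i, 0 < d i) (ha : ∀ i, a i i = 2)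
    (i : Fin n) {μ : Fin n → ℤ} (hμ : wtSp q d K ρ μ ≠ ⊥) :
    wtSp q d K ρ (μ - μ i • simpleRoot a i) ≠ ⊥ := by
  have hq0 := ne_zero_of_zpow_injective hq
  rcases le_total 0 (μ i) with hi | hi
  · exact hrel.wtSp_reflection_ne_bot_of_nonneg hq hd ha hi hμ
  · rw [← neg_neg μ, ← wtSp_inv hq0] at hμ
    have h := (hrel.chevalley_involution hq0).wtSp_reflection_ne_bot_of_nonneg hq hd ha
      (neg_nonneg.2 hi) hμ
    rwa [wtSp_inv hq0, Pi.neg_apply, neg_smul, sub_neg_eq_add, neg_add, neg_neg,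
      ← sub_eq_add_neg] at h

theorem wtSp_smul_ne_bot (hrel : UqRels q a d U E F K)
    (hq : Function.Injective fun k : ℤ => q ^ k) (hd : ∀ i, 0 < d i) {W : Type*} [Group W]
    [Finite W] [DistribMulAction W (Fin n → ℤ)] {s : Fin n → W} (hW : IsWeylAction a s)
    {μ : Fin n → ℤ} (hμ : wtSp q d K ρ μ ≠ ⊥) (w : W) : wtSp q d K ρ (w • μ) ≠ ⊥ := by
  refine hW.induction (p := fun w => wtSp q d K ρ (w • μ) ≠ ⊥) (by rwa [one_smul])
    (fun i w ih => ?_) w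
  rw [mul_smul, hW.smul_eq]
  exact hrel.wtSp_reflection_ne_bot hq hd hW.diag i ih

end UqRels

end WeightSpaces

section HighestWeight

/-- The generators `E i`, `F i`, `K i`, `(K i)⁻¹` of `U_q(𝔤)` as an algebra. -/
def uqGenerators {n : ℕ} {U : Type*} [Monoid U] (E F : Fin n → U) (K : Fin n → Uˣ) : Set U :=
  Set.range E ∪ Set.range F ∪ Set.range (fun i => (K i : U)) ∪ Set.range fun i => ((K i)⁻¹ : Uˣ).val

/-- `v` generates the `U`-module `V` as a highest weight vector of weight `μ`. -/
structure IsHighestWeightGenerator (q : ℂ) {n : ℕ} (d : Fin n → ℕ) {U : Type} [Ring U]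
    [Algebra ℂ U] (E : Fin n → U) (K : Fin n → Uˣ) {V : Type} [AddCommGroup V] [Module ℂ V]
    (ρ : U →ₐ[ℂ] Module.End ℂ V) (μ : Fin n → ℤ) (v : V) : Prop where
  ne_zero : v ≠ 0
  mem_wtSp : v ∈ wtSp q d K ρ μ
  E_apply_eq_zero : ∀ i, ρ (E i) v = 0
  eq_top_of_mem : ∀ N : Submodule ℂ V, (∀ u, ∀ x ∈ N, ρ u x ∈ N) → v ∈ N → N = ⊤

theorem IsHighestWeightGenerator.of_simple {q : ℂ} {n : ℕ} {d : Fin n → ℕ} {U : Type} [Ring U]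
    [Algebra ℂ U] {E : Fin n → U} {K : Fin n → Uˣ} {V : Type} [AddCommGroup V] [Module ℂ V]
    {ρ : U →ₐ[ℂ] Module.End ℂ V} {μ : Fin n → ℤ} {v : V}
    (hsimple : ∀ N : Submodule ℂ V, (∀ u, ∀ x ∈ N, ρ u x ∈ N) → N = ⊥ ∨ N = ⊤) (hv0 : v ≠ 0)
    (hv : v ∈ wtSp q d K ρ μ) (hEv : ∀ i, ρ (E i) v = 0) :
    IsHighestWeightGenerator q d E K ρ μ v where
  ne_zero := hv0
  mem_wtSp := hv
  E_apply_eq_zero := hEv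
  eq_top_of_mem N hN hvN :=
    (hsimple N hN).resolve_left fun hbot => hv0 ((Submodule.mem_bot ℂ).1 (hbot ▸ hvN))

/-- The span of the vectors `F i₁ ⋯ F iₘ v`, which is the submodule generated by `v` when `v` is a
highest weight vector. -/
def loweringSpan {n : ℕ} {U : Type} [Ring U] [Algebra ℂ U] (F : Fin n → U) {V : Type}
    [AddCommGroup V] [Module ℂ V] (ρ : U →ₐ[ℂ] Module.End ℂ V) (v : V) : Submodule ℂ V :=
  Submodule.span ℂ (Set.range fun l : List (Fin n) => ρ (l.map F).prod v)

theorem apply_mem_of_adjoin_eq_top {R A M : Type*} [CommRing R] [Ring A] [Algebra R A]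
    [AddCommGroup M] [Module R M] {ρ : A →ₐ[R] Module.End R M} {g : Set A}
    (hg : Algebra.adjoin R g = ⊤) {N : Submodule R M} (hN : ∀ x ∈ g, N ≤ N.comap (ρ x)) (u : A) :
    N ≤ N.comap (ρ u) := by
  have hu : u ∈ Algebra.adjoin R g := hg ▸ Algebra.mem_top
  induction hu using Algebra.adjoin_induction with
  | mem x hx => exact hN x hx
  | algebraMap r => exact fun y hy => by simpa using N.smul_mem r hy
  | add x y _ _ hx hy => exact fun z hz => by simpa using N.add_mem (hx hz) (hy hz)
  | mul x y _ _ hx hy => exact fun z hz => by simpa using hx (hy hz)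

variable {q : ℂ} {n : ℕ} {a : Fin n → Fin n → ℤ} {d : Fin n → ℕ}
  {U : Type} [Ring U] [Algebra ℂ U] {E F : Fin n → U} {K : Fin n → Uˣ}
  {V : Type} [AddCommGroup V] [Module ℂ V] {ρ : U →ₐ[ℂ] Module.End ℂ V}
  {μ ν : Fin n → ℤ} {v : V}

/-- The relations restrict to the subalgebra `S` generated by `E`, `F`, `K`, so universality gives
a retraction `U → S` over the generators; composed with `S ⊆ U` it is the identity. -/
theorem UqRels.adjoin_eq_top (hrel : UqRels q a d U E F K)
    (huniv : ∀ (B : Type) [Ring B] [Algebra ℂ B] (E' F' : Fin n → B) (K' : Fin n → Bˣ),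
      UqRels q a d B E' F' K' → ∃! φ : U →ₐ[ℂ] B,
        (∀ i, φ (E i) = E' i) ∧ (∀ i, φ (F i) = F' i) ∧ (∀ i, φ (K i : U) = (K' i : B))) :
    Algebra.adjoin ℂ (uqGenerators E F K) = ⊤ := by
  set S := Algebra.adjoin ℂ (uqGenerators E F K)
  let E' (i : Fin n) : S := ⟨E i, Algebra.subset_adjoin (by simp [uqGenerators])⟩
  let F' (i : Fin n) : S := ⟨F i, Algebra.subset_adjoin (by simp [uqGenerators])⟩
  let K' (i : Fin n) : Sˣ :=
    { val := ⟨K i, Algebra.subset_adjoin (by simp [uqGenerators])⟩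
      inv := ⟨((K i)⁻¹ : Uˣ), Algebra.subset_adjoin (by simp [uqGenerators])⟩
      val_inv := Subtype.ext (K i).mul_inv
      inv_val := Subtype.ext (K i).inv_mul }
  have hrel' : UqRels q a d S E' F' K' := by
    obtain ⟨hKK, hKE, hKF, hEF, hEserre, hFserre⟩ := hrel
    refine ⟨fun i j => Subtype.ext (hKK i j), fun i j => Subtype.ext (hKE i j),
      fun i j => Subtype.ext (hKF i j), fun i j => Subtype.ext ?_,
      fun i j hij => Subtype.ext ?_, fun i j hij => Subtype.ext ?_⟩
    · rw [apply_ite Subtype.val]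
      exact hEF i j
    · simpa [E'] using hEserre i j hij
    · simpa [F'] using hFserre i j hij
  obtain ⟨φ, ⟨hE, hF, hK⟩, -⟩ := huniv S E' F' K' hrel'
  have hretract : S.val.comp φ = AlgHom.id ℂ U := (huniv U E F K hrel).unique
    ⟨fun i => congrArg Subtype.val (hE i), fun i => congrArg Subtype.val (hF i),
      fun i => congrArg Subtype.val (hK i)⟩
    ⟨fun _ => rfl, fun _ => rfl, fun _ => rfl⟩
  refine Algebra.eq_top_iff.2 fun u => ?_
  rw [← AlgHom.id_apply (R := ℂ) u, ← hretract]
  exact (φ u).2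

theorem lowering_mem_loweringSpan (F : Fin n → U) (ρ : U →ₐ[ℂ] Module.End ℂ V) (v : V)
    (l : List (Fin n)) : ρ (l.map F).prod v ∈ loweringSpan F ρ v :=
  Submodule.subset_span ⟨l, rfl⟩

theorem loweringSpan_le_iff {N : Submodule ℂ V} :
    loweringSpan F ρ v ≤ N ↔ ∀ l : List (Fin n), ρ (l.map F).prod v ∈ N :=
  Submodule.span_le.trans Set.range_subset_iff

theorem loweringSpan_le_comap_F (i : Fin n) :
    loweringSpan F ρ v ≤ (loweringSpan F ρ v).comap (ρ (F i)) :=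
  loweringSpan_le_iff.2 fun l => by
    simpa using lowering_mem_loweringSpan F ρ v (i :: l)

namespace UqRels

theorem lowering_mem_wtSp (hrel : UqRels q a d U E F K) (hq : q ≠ 0)
    (hv : v ∈ wtSp q d K ρ μ) (l : List (Fin n)) :
    ρ (l.map F).prod v ∈ wtSp q d K ρ (μ - (l.map (simpleRoot a)).sum) := by
  induction l with
  | nil => simpa using hv
  | cons i l ih =>
    simpa [← sub_sub, sub_right_comm] using hrel.F_apply_mem_wtSp hq ih i

theorem loweringSpan_le_comap_E (hrel : UqRels q a d U E F K) (hq : q ≠ 0)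
    (hv : v ∈ wtSp q d K ρ μ) (hEv : ∀ i, ρ (E i) v = 0) (i : Fin n) :
    loweringSpan F ρ v ≤ (loweringSpan F ρ v).comap (ρ (E i)) := by
  refine loweringSpan_le_iff.2 fun l => ?_
  induction l with
  | nil => simp [hEv]
  | cons j l ih =>
    rw [Submodule.mem_comap, List.map_cons, List.prod_cons, map_mul, Module.End.mul_apply,
      eq_add_of_sub_eq (hrel.commutator_apply hq (hrel.lowering_mem_wtSp hq hv l) i j)]
    refine add_mem ?_ (loweringSpan_le_comap_F j ih)
    split_ifs
    · exact Submodule.smul_mem _ _ (lowering_mem_loweringSpan F ρ v l)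
    · exact Submodule.zero_mem _

theorem loweringSpan_le_comap (hrel : UqRels q a d U E F K) (hq : q ≠ 0)
    (hgen : Algebra.adjoin ℂ (uqGenerators E F K) = ⊤)
    (hv : v ∈ wtSp q d K ρ μ) (hEv : ∀ i, ρ (E i) v = 0) (u : U) :
    loweringSpan F ρ v ≤ (loweringSpan F ρ v).comap (ρ u) := by
  refine apply_mem_of_adjoin_eq_top hgen ?_ u
  rintro _ (((⟨i, rfl⟩ | ⟨i, rfl⟩) | ⟨i, rfl⟩) | ⟨i, rfl⟩)
  · exact hrel.loweringSpan_le_comap_E hq hv hEv i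
  · exact loweringSpan_le_comap_F i
  · refine loweringSpan_le_iff.2 fun l => ?_
    rw [Submodule.mem_comap, mem_wtSp_iff.1 (hrel.lowering_mem_wtSp hq hv l) i]
    exact Submodule.smul_mem _ _ (lowering_mem_loweringSpan F ρ v l)
  · refine loweringSpan_le_iff.2 fun l => ?_
    rw [Submodule.mem_comap, inv_apply_of_mem_wtSp hq (hrel.lowering_mem_wtSp hq hv l) i]
    exact Submodule.smul_mem _ _ (lowering_mem_loweringSpan F ρ v l)

end UqRels

theorem IsHighestWeightGenerator.sub_mem_of_wtSp_ne_bot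
    (hv : IsHighestWeightGenerator q d E K ρ μ v) (hrel : UqRels q a d U E F K)
    (hq : Function.Injective fun k : ℤ => q ^ k) (hd : ∀ i, 0 < d i)
    (hgen : Algebra.adjoin ℂ (uqGenerators E F K) = ⊤)
    (hν : wtSp q d K ρ ν ≠ ⊥) : μ - ν ∈ positiveRootMonoid a := by
  have hq0 := ne_zero_of_zpow_injective hq
  have htop : loweringSpan F ρ v = ⊤ := hv.eq_top_of_mem _
    (hrel.loweringSpan_le_comap hq0 hgen hv.mem_wtSp hv.E_apply_eq_zero)
    (by simpa using lowering_mem_loweringSpan F ρ v [])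
  by_contra hμν
  have hle : loweringSpan F ρ v ≤ ⨆ (ν' : Fin n → ℤ) (_ : ν' ≠ ν), wtSp q d K ρ ν' := by
    refine loweringSpan_le_iff.2 fun l => Submodule.mem_iSup_of_mem _
      (Submodule.mem_iSup_of_mem ?_ (hrel.lowering_mem_wtSp hq0 hv.mem_wtSp l))
    rintro rfl
    refine hμν ?_
    rw [sub_sub_cancel]
    refine list_sum_mem fun x hx => ?_
    obtain ⟨i, -, rfl⟩ := List.mem_map.1 hx
    exact simpleRoot_mem_positiveRootMonoid a i
  have hdisj := hrel.iSupIndep_wtSp (ρ := ρ) hq hd ν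
  rw [htop, top_le_iff] at hle
  rw [hle, disjoint_top] at hdisj
  exact hν hdisj

end HighestWeight

section LowestWeight

variable {q : ℂ} {n : ℕ} {a : Fin n → Fin n → ℤ} {d : Fin n → ℕ}
  {U : Type} [Ring U] [Algebra ℂ U] {E F : Fin n → U} {K : Fin n → Uˣ}
  {V : Type} [AddCommGroup V] [Module ℂ V] [FiniteDimensional ℂ V] {ρ : U →ₐ[ℂ] Module.End ℂ V}
  {W : Type*} [Group W] [Finite W] [DistribMulAction W (Fin n → ℤ)] {s : Fin n → W}
  {μ : Fin n → ℤ} {v : V}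

namespace IsHighestWeightGenerator

theorem sub_smul_mem (hv : IsHighestWeightGenerator q d E K ρ μ v) (hrel : UqRels q a d U E F K)
    (hq : Function.Injective fun k : ℤ => q ^ k) (hd : ∀ i, 0 < d i)
    (hgen : Algebra.adjoin ℂ (uqGenerators E F K) = ⊤) (hW : IsWeylAction a s) (w : W) :
    μ - w • μ ∈ positiveRootMonoid a :=
  hv.sub_mem_of_wtSp_ne_bot hrel hq hd hgen <| hrel.wtSp_smul_ne_bot hq hd hW
    ((Submodule.ne_bot_iff _).2 ⟨v, hv.mem_wtSp, hv.ne_zero⟩) w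

variable {w₀ : W} {π : Equiv.Perm (Fin n)}

/-- Both `μ - w₀² μ` and `w₀² (μ - w₀⁻² μ)` lie in `Q⁺`, and they are opposite. -/
theorem longest_smul_longest_smul (hv : IsHighestWeightGenerator q d E K ρ μ v)
    (hrel : UqRels q a d U E F K) (hq : Function.Injective fun k : ℤ => q ^ k)
    (hd : ∀ i, 0 < d i) (hgen : Algebra.adjoin ℂ (uqGenerators E F K) = ⊤)
    (hW : IsWeylAction a s) (hπ : IsOpposition a w₀ π) : w₀ • w₀ • μ = μ := by
  have hmem := hv.sub_smul_mem hrel hq hd hgen hW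
  have hpos := hmem (w₀ * w₀)
  have hneg := hπ.neg_smul_mem (hπ.neg_smul_mem (hmem (w₀ * w₀)⁻¹))
  rw [smul_neg, neg_neg, ← mul_smul, smul_sub, smul_inv_smul, ← neg_sub] at hneg
  rw [← mul_smul, ← sub_eq_zero, ← neg_sub, hW.eq_zero_of_mem_of_neg_mem hpos hneg, neg_zero]

/-- If `⟨w₀ μ, αᵢ^∨⟩ = 0`, reflecting the weight `w₀ μ + αᵢ` makes `w₀ μ - αᵢ` a weight, and `w₀⁻¹`
carries it above the highest weight. -/
theorem longest_smul_apply_ne_zero (hv : IsHighestWeightGenerator q d E K ρ μ v)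
    (hrel : UqRels q a d U E F K) (hq : Function.Injective fun k : ℤ => q ^ k)
    (hd : ∀ i, 0 < d i) (hgen : Algebra.adjoin ℂ (uqGenerators E F K) = ⊤)
    (hW : IsWeylAction a s) (hπ : IsOpposition a w₀ π) {u : V}
    (hu : u ∈ wtSp q d K ρ (w₀ • μ)) {i : Fin n} (hEu : ρ (E i) u ≠ 0) : (w₀ • μ) i ≠ 0 := by
  intro hi
  have hweight : wtSp q d K ρ (w₀ • μ + simpleRoot a i) ≠ ⊥ := (Submodule.ne_bot_iff _).2
    ⟨_, hrel.E_apply_mem_wtSp (ne_zero_of_zpow_injective hq) hu i, hEu⟩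
  have hreflect : s i • (w₀ • μ + simpleRoot a i) = w₀ • μ - simpleRoot a i := by
    have hcoord : (w₀ • μ + simpleRoot a i) i = 2 := by
      rw [Pi.add_apply, hi, simpleRoot, hW.diag, zero_add]
    rw [hW.smul_eq, hcoord, two_smul, add_sub_add_right_eq_sub]
  have habove : (w₀⁻¹ * s i) • (w₀ • μ + simpleRoot a i) = μ + simpleRoot a (π.symm i) := by
    rw [mul_smul, hreflect, smul_sub, inv_smul_smul, hπ.inv_smul_simpleRoot, sub_neg_eq_add]
  have hneg := hv.sub_mem_of_wtSp_ne_bot hrel hq hd hgen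
    (habove ▸ hrel.wtSp_smul_ne_bot hq hd hW hweight (w₀⁻¹ * s i))
  rw [sub_add_cancel_left] at hneg
  exact simpleRoot_ne_zero (by rw [hW.diag]; exact two_ne_zero)
    (hW.eq_zero_of_mem_of_neg_mem (simpleRoot_mem_positiveRootMonoid a _) hneg)

end IsHighestWeightGenerator

theorem lowest_weight_raising_general (hrel : UqRels q a d U E F K)
    (hq : Function.Injective fun k : ℤ => q ^ k) (hd : ∀ i, 0 < d i)
    (hgen : Algebra.adjoin ℂ (uqGenerators E F K) = ⊤) (hW : IsWeylAction a s) {w₀ : W}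
    (hw₀ : ∀ μ : Fin n → ℤ, 0 ≤ μ → w₀ • μ ≤ 0) {j : Fin n}
    (hv : IsHighestWeightGenerator q d E K ρ (Pi.single j 1) v)
    (hone : Module.finrank ℂ (wtSp q d K ρ ((w₀ * s j) • Pi.single j 1)) = 1)
    {u : V} (hu : u ∈ wtSp q d K ρ (w₀ • Pi.single j 1)) {i : Fin n} (hEu : ρ (E i) u ≠ 0) :
    w₀ • simpleRoot a i = -simpleRoot a j ∧
      ρ (E i) u ∈ wtSp q d K ρ ((w₀ * s j) • Pi.single j 1) ∧
      ∀ x ∈ wtSp q d K ρ ((w₀ * s j) • Pi.single j 1), x ≠ 0 →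
        ∃ z : ℂ, z ≠ 0 ∧ ρ (E i) u = z • x := by
  obtain ⟨π, hπ⟩ := hW.exists_isOpposition hw₀
  have hππ : π (π j) = j := by
    have h := hv.longest_smul_longest_smul hrel hq hd hgen hW hπ
    rw [hπ.smul_fundamental, smul_neg, hπ.smul_fundamental, neg_neg] at h
    by_contra hne
    simpa [hne] using congrFun h (π (π j))
  obtain rfl : i = π j := by
    by_contra hij
    have h := hv.longest_smul_apply_ne_zero hrel hq hd hgen hW hπ hu hEu
    exact h (by rw [hπ.smul_fundamental, Pi.neg_apply, Pi.single_eq_of_ne hij, neg_zero])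
  have hwt : (w₀ * s j) • (Pi.single j 1 : Fin n → ℤ) =
      w₀ • (Pi.single j 1 : Fin n → ℤ) + simpleRoot a (π j) := by
    rw [mul_smul, hW.smul_eq, Pi.single_eq_same, one_smul, smul_sub, hπ.smul_simpleRoot,
      sub_neg_eq_add]
  have hmem : ρ (E (π j)) u ∈ wtSp q d K ρ ((w₀ * s j) • Pi.single j 1) :=
    hwt ▸ hrel.E_apply_mem_wtSp (ne_zero_of_zpow_injective hq) hu (π j)
  refine ⟨by rw [hπ.smul_simpleRoot, hππ], hmem, fun x hx hx0 => ?_⟩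
  obtain ⟨z, hz⟩ := exists_smul_eq_of_finrank_eq_one hone
    (x := ⟨x, hx⟩) (fun h => hx0 (congrArg Subtype.val h)) ⟨_, hmem⟩
  have hzx : z • x = ρ (E (π j)) u := congrArg Subtype.val hz
  exact ⟨z, fun h0 => hEu (by rw [← hzx, h0, zero_smul]), hzx.symm⟩

end LowestWeight

/-- The action of `W` on `A` by the additive automorphisms `σ w`. -/
abbrev distribMulActionOfAddAut {W A : Type*} [Monoid W] [AddMonoid A]
    (σ : W →* Multiplicative (AddAut A)) : DistribMulAction W A where
  smul w x := σ w x
  one_smul x := congrArg (fun g : Multiplicative (AddAut A) => g x) (map_one σ)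
  mul_smul w w' x := congrArg (fun g : Multiplicative (AddAut A) => g x) (map_mul σ w w')
  smul_zero w := map_zero (Multiplicative.toAdd (σ w))
  smul_add w := map_add (Multiplicative.toAdd (σ w))

theorem lowest_weight_raising
    -- the deformation parameter: a transcendental complex number
    (q : ℂ) (hq : Transcendental ℚ q)
    -- Cartan data of the complex semisimple Lie algebra 𝔤 of rank n
    (n : ℕ) (hn : 0 < n) (a : Fin n → Fin n → ℤ) (d : Fin n → ℕ)
    (ha_diag : ∀ i, a i i = 2) (ha_off : ∀ i j, i ≠ j → a i j ≤ 0)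
    (ha_zero : ∀ i j, a i j = 0 ↔ a j i = 0)
    (hd_pos : ∀ i, 0 < d i)
    (ha_symm : ∀ i j, (d i : ℤ) * a i j = (d j : ℤ) * a j i)
    -- the quantised enveloping algebra U = U_q(𝔤): carries elements E i, F i and units K i
    -- satisfying the defining relations, and is universal for these relations
    (U : Type) [Ring U] [Algebra ℂ U]
    (E F : Fin n → U) (K : Fin n → Uˣ)
    (hrel : UqRels q a d U E F K)
    (hUuniv : ∀ (B : Type) [Ring B] [Algebra ℂ B] (E' F' : Fin n → B) (K' : Fin n → Bˣ),
      UqRels q a d B E' F' K' → ∃! φ : U →ₐ[ℂ] B,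
        (∀ i, φ (E i) = E' i) ∧ (∀ i, φ (F i) = F' i) ∧ (∀ i, φ (K i : U) = (K' i : B)))
    -- the Weyl group W, acting faithfully on the weight lattice P = ℤⁿ (coordinates taken in
    -- the basis of fundamental weights ϖ i), generated by the simple reflections s i, with
    -- longest element w₀ (characterised by: w₀ maps dominant weights to antidominant ones)
    (W : Type) [Group W] [Finite W] (σ : W →* Multiplicative (AddAut (Fin n → ℤ)))
    (hσinj : Function.Injective σ)
    (s : Fin n → W) (hsgen : Subgroup.closure (Set.range s) = ⊤)
    (hs : ∀ i (μ : Fin n → ℤ), σ (s i) μ = fun k => μ k - μ i * a k i)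
    (w₀ : W) (hw₀ : ∀ μ : Fin n → ℤ, (∀ i, 0 ≤ μ i) → ∀ i, σ w₀ μ i ≤ 0)
    -- the simple finite-dimensional modules V(λ) of highest weight λ = ∑ c i ϖ i ∈ P⁺
    (V : (Fin n → ℕ) → Type) [∀ c, AddCommGroup (V c)] [∀ c, Module ℂ (V c)]
    (ρ : ∀ c, U →ₐ[ℂ] Module.End ℂ (V c))
    (hfd : ∀ c, FiniteDimensional ℂ (V c))
    (hsimple : ∀ c (N : Submodule ℂ (V c)), (∀ (u : U), ∀ v ∈ N, ρ c u v ∈ N) → N = ⊥ ∨ N = ⊤)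
    (hhw : ∀ c, ∃ v : V c, v ≠ 0 ∧ v ∈ wtSp q d K (ρ c) (fun i => (c i : ℤ)) ∧
      ∀ i, ρ c (E i) v = 0)
    (hwtsum : ∀ c, (⨆ μ : Fin n → ℤ, wtSp q d K (ρ c) μ) = ⊤)
    (hextremal : ∀ c (w : W),
      Module.finrank ℂ (wtSp q d K (ρ c) (σ w (fun i => (c i : ℤ)))) = 1) :
    -- if u is a nonzero lowest weight vector of V(ϖ_j) and E_i · u ≠ 0, then
    -- w₀ α_i = -α_j and E_i · u is a nonzero scalar multiple of a vector of weight w₀ s_j ϖ_j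
    ∀ j : Fin n, ∀ u : V (Pi.single j 1),
      u ∈ wtSp q d K (ρ (Pi.single j 1)) (σ w₀ (fun k => ((Pi.single j 1 : Fin n → ℕ) k : ℤ))) → u ≠ 0 →
      ∀ i : Fin n, ρ (Pi.single j 1) (E i) u ≠ 0 →
        (σ w₀ (fun k => a k i) = fun k => -(a k j)) ∧
        ρ (Pi.single j 1) (E i) u ∈
          wtSp q d K (ρ (Pi.single j 1)) (σ (w₀ * s j) (fun k => ((Pi.single j 1 : Fin n → ℕ) k : ℤ))) ∧
        ∀ v ∈ wtSp q d K (ρ (Pi.single j 1)) (σ (w₀ * s j) (fun k => ((Pi.single j 1 : Fin n → ℕ) k : ℤ))), v ≠ 0 →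
          ∃ z : ℂ, z ≠ 0 ∧ ρ (Pi.single j 1) (E i) u = z • v := by
  intro j u hu _ i hEu
  have hcast : (fun k => ((Pi.single j 1 : Fin n → ℕ) k : ℤ)) = Pi.single j 1 := by
    ext k
    simp [Pi.single_apply]
  simp only [hcast] at hu ⊢
  let := distribMulActionOfAddAut σ
  have := hfd (Pi.single j 1)
  obtain ⟨v, hv0, hv, hEv⟩ := hhw (Pi.single j 1)
  have hV : IsHighestWeightGenerator q d E K (ρ (Pi.single j 1)) (Pi.single j 1) v :=
    .of_simple (hsimple _) hv0 (hcast ▸ hv) hEv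
  have hW : IsWeylAction a s := ⟨ha_diag, hsgen, hs⟩
  exact lowest_weight_raising_general hrel (zpow_injective_of_transcendental hq) hd_pos
    (hrel.adjoin_eq_top hUuniv) hW hw₀ hV (hcast ▸ hextremal _ (w₀ * s j)) hu hEu
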